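/- Let M be a finitely generated FI-module over ℂ. Then there exist integers n, N and a polynomial X ∈ ℚ[a_1,…,a_n] (the character polynomial of M) such that for every partition μ with |μ| > N, the trace of M(σ_μ) on M_{|μ|} equals X(m_1(μ),…,m_n(μ)), where σ_μ ∈ S_{|μ|} is any permutation of cycle type μ. -/

import Mathlib

open CategoryTheory

structure FIObj where
  α : Type
  fin : Fintype α

instance (S : FIObj) : Fintype S.α := S.fin

def FIObj.of (α : Type) [Fintype α] : FIObj := ⟨α, inferInstance⟩

instance : Category FIObj where
  Hom S T := {f : S.α → T.α // Function.Injective f}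
  id S := ⟨id, Function.injective_id⟩
  comp f g := ⟨g.1 ∘ f.1, g.2.comp f.2⟩

/-- FI-modules over ℂ: functors from FI to ℂ-vector spaces. -/
abbrev FIMod := FIObj ⥤ ModuleCat.{0} ℂ

/-- A sub-FI-module. -/
structure FISub (M : FIMod) where
  carrier : ∀ S : FIObj, Submodule ℂ (M.obj S)
  map_mem : ∀ {S T : FIObj} (f : S ⟶ T) (x : M.obj S), x ∈ carrier S → M.map f x ∈ carrier T

/-- A finitely generated FI-module. -/
def FIMod.FG (M : FIMod) : Prop :=
  ∃ (k : ℕ) (S : Fin k → FIObj) (m : ∀ i, M.obj (S i)),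
    ∀ N : FISub M, (∀ i, m i ∈ N.carrier (S i)) → ∀ T, N.carrier T = ⊤
/-- The trace of the automorphism of `M_n = M({1,…,n})` induced by a permutation σ. -/
noncomputable def traceOfPerm (M : FIMod) (n : ℕ) (σ : Equiv.Perm (Fin n)) : ℂ :=
  LinearMap.trace ℂ (M.obj (FIObj.of (Fin n))) ((M.map (⟨σ, σ.injective⟩ :
    FIObj.of (Fin n) ⟶ FIObj.of (Fin n))).hom)

namespace FIChar

structure FIM where
  V : FIObj → Type
  [ag : ∀ S, AddCommGroup (V S)]
  [mo : ∀ S, Module ℂ (V S)]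
  act : ∀ {S T : FIObj}, (S ⟶ T) → V S →ₗ[ℂ] V T
  act_id : ∀ (S : FIObj) (x : V S), act (𝟙 S) x = x
  act_comp : ∀ {S T U : FIObj} (f : S ⟶ T) (g : T ⟶ U) (x : V S), act (f ≫ g) x = act g (act f x)

attribute [instance] FIM.ag FIM.mo

noncomputable instance instFinHom (S T : FIObj) : Fintype (S ⟶ T) :=
  @Fintype.ofFinite _ (inferInstanceAs (Finite {f : S.α → T.α // Function.Injective f}))

abbrev crd (S : FIObj) : ℕ := Fintype.card S.α

theorem hom_ext {S T : FIObj} {f g : S ⟶ T} (h : ∀ x, f.1 x = g.1 x) : f = g :=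
  Subtype.ext (funext h)

theorem comp_val {S T U : FIObj} (f : S ⟶ T) (g : T ⟶ U) (x : S.α) : (f ≫ g).1 x = g.1 (f.1 x) := rfl
theorem id_val {S : FIObj} (x : S.α) : (𝟙 S : S ⟶ S).1 x = x := rfl

structure Sub (M : FIM) where
  carrier : ∀ S : FIObj, Submodule ℂ (M.V S)
  map_mem : ∀ {S T : FIObj} (f : S ⟶ T) (x : M.V S), x ∈ carrier S → M.act f x ∈ carrier T

noncomputable abbrev Sub.sub {M : FIM} (N : Sub M) : FIM where
  V S := N.carrier S
  act f := (M.act f).restrict (fun x hx => N.map_mem f x hx)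
  act_id S x := Subtype.ext (M.act_id S x)
  act_comp f g x := Subtype.ext (M.act_comp f g x)

noncomputable abbrev Sub.quot {M : FIM} (N : Sub M) : FIM where
  V S := M.V S ⧸ N.carrier S
  act f := Submodule.mapQ _ _ (M.act f) (fun x hx => N.map_mem f x hx)
  act_id S x := by
    induction x using Submodule.Quotient.induction_on with
    | H x => rw [Submodule.mapQ_apply, M.act_id]
  act_comp f g x := by
    induction x using Submodule.Quotient.induction_on with
    | H x => rw [Submodule.mapQ_apply, M.act_comp]; rfl

def addA (S : FIObj) (a : ℕ) : FIObj := ⟨S.α ⊕ Fin a, inferInstance⟩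

def sumMap {S T : FIObj} (f : S ⟶ T) (a : ℕ) : addA S a ⟶ addA T a :=
  ⟨Sum.map f.1 id, Function.Injective.sumMap f.2 Function.injective_id⟩

def inl (S : FIObj) (a : ℕ) : S ⟶ addA S a := ⟨Sum.inl, Sum.inl_injective⟩

abbrev shift (M : FIM) (a : ℕ) : FIM where
  V S := M.V (addA S a)
  act f := M.act (sumMap f a)
  act_id S x := by
    have : sumMap (𝟙 S) a = 𝟙 (addA S a) := hom_ext (fun x => by rcases x with x | x <;> rfl)
    rw [this, M.act_id]
  act_comp f g x := by
    have : sumMap (f ≫ g) a = sumMap f a ≫ sumMap g a :=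
      hom_ext (fun x => by rcases x with x | x <;> rfl)
    rw [this, M.act_comp]

/-- Submodule generated in degrees less than d. -/
def low (M : FIM) (d : ℕ) : Sub M where
  carrier S := Submodule.span ℂ {x | ∃ (T : FIObj) (f : T ⟶ S) (y : M.V T), crd T < d ∧ M.act f y = x}
  map_mem := by
    intro S T f x hx
    induction hx using Submodule.span_induction with
    | mem x hx =>
      obtain ⟨U, g, y, h, rfl⟩ := hx
      exact Submodule.subset_span ⟨U, g ≫ f, y, h, M.act_comp _ _ _⟩
    | zero => rw [map_zero]; exact zero_mem _
    | add x y _ _ hx hy => rw [map_add]; exact add_mem hx hy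
    | smul c x _ hx => rw [map_smul]; exact Submodule.smul_mem _ _ hx

def FD (M : FIM) : Prop := ∀ S, FiniteDimensional ℂ (M.V S)

noncomputable def pp (i : ℕ) : ∀ S : FIObj, (S ⟶ S) → ℂ :=
  fun S σ => (Nat.card {x : S.α // Function.minimalPeriod σ.1 x = i} : ℂ)

noncomputable def CP : Subalgebra ℂ (∀ S : FIObj, (S ⟶ S) → ℂ) :=
  Algebra.adjoin ℂ (Set.range (fun i : ℕ => pp (i + 1)))

def Inj (M : FIM) : Prop := ∃ N, ∀ (S T : FIObj) (f : S ⟶ T), N ≤ crd S → ∀ x, M.act f x = 0 → x = 0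

def Pol (M : FIM) : Prop := ∃ F ∈ CP, ∃ N, ∀ (S : FIObj) (σ : S ⟶ S), N ≤ crd S →
  LinearMap.trace ℂ (M.V S) (M.act σ) = F S σ

theorem trace_exact {A B C : Type} [AddCommGroup A] [AddCommGroup B] [AddCommGroup C]
    [Module ℂ A] [Module ℂ B] [Module ℂ C] [FiniteDimensional ℂ A] [FiniteDimensional ℂ B]
    [FiniteDimensional ℂ C] (f : A →ₗ[ℂ] B) (g : B →ₗ[ℂ] C) (hf : ∀ x, f x = 0 → x = 0)
    (hg : Function.Surjective g) (hfg : ∀ x, g (f x) = 0) (hex : ∀ y, g y = 0 → ∃ x, f x = y)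
    (a : A →ₗ[ℂ] A) (b : B →ₗ[ℂ] B) (c : C →ₗ[ℂ] C)
    (hab : ∀ x, b (f x) = f (a x)) (hbc : ∀ y, g (b y) = c (g y)) :
    LinearMap.trace ℂ B b = LinearMap.trace ℂ A a + LinearMap.trace ℂ C c := by
  obtain ⟨s, hs⟩ := LinearMap.exists_rightInverse_of_surjective g (LinearMap.range_eq_top.2 hg)
  obtain ⟨f', hf'⟩ := LinearMap.exists_leftInverse_of_injective f
    (LinearMap.ker_eq_bot'.2 hf)
  have hs' : ∀ x, g (s x) = x := fun x => LinearMap.congr_fun hs x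
  have hf'' : ∀ x, f' (f x) = x := fun x => LinearMap.congr_fun hf' x
  let r : B →ₗ[ℂ] A := f' ∘ₗ (LinearMap.id - s ∘ₗ g)
  have h1 : ∀ y, f (r y) + s (g y) = y := by
    intro y
    obtain ⟨x, hx⟩ := hex (y - s (g y)) (by rw [map_sub, hs', sub_self])
    have : r y = x := by
      simp only [r, LinearMap.comp_apply, LinearMap.sub_apply, LinearMap.id_apply]
      rw [← hx, hf'']
    rw [this, hx]; abel
  have hb : b = (f ∘ₗ a) ∘ₗ r + (b ∘ₗ s) ∘ₗ g := by
    ext y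
    simp only [LinearMap.add_apply, LinearMap.comp_apply]
    rw [← hab, ← map_add, h1]
  have e1 : r ∘ₗ (f ∘ₗ a) = a := by
    ext x
    simp only [r, LinearMap.comp_apply, LinearMap.sub_apply, LinearMap.id_apply, hfg, map_zero,
      sub_zero, hf'']
  have e2 : g ∘ₗ (b ∘ₗ s) = c := by
    ext x
    simp only [LinearMap.comp_apply, hbc, hs']
  conv_lhs => rw [hb]
  rw [map_add, LinearMap.trace_comp_comm' r (f ∘ₗ a), LinearMap.trace_comp_comm' g (b ∘ₗ s), e1, e2]

theorem Inj.ext {M : FIM} (N : Sub M) (h1 : Inj N.sub) (h2 : Inj N.quot) : Inj M := by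
  obtain ⟨n1, h1⟩ := h1
  obtain ⟨n2, h2⟩ := h2
  refine ⟨max n1 n2, fun S T f hS x hx => ?_⟩
  have hq : (Submodule.Quotient.mk x : M.V S ⧸ N.carrier S) = 0 := by
    apply h2 S T f (le_trans (le_max_right _ _) hS)
    exact congrArg (Submodule.Quotient.mk (p := N.carrier T)) hx
  have hN : x ∈ N.carrier S := (Submodule.Quotient.mk_eq_zero _).1 hq
  have := h1 S T f (le_trans (le_max_left _ _) hS) ⟨x, hN⟩ (Subtype.ext hx)
  exact congrArg Subtype.val this

theorem Pol.ext {M : FIM} (hM : FD M) (N : Sub M) (h1 : Pol N.sub) (h2 : Pol N.quot) : Pol M := by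
  obtain ⟨F1, hF1, n1, h1⟩ := h1
  obtain ⟨F2, hF2, n2, h2⟩ := h2
  refine ⟨F1 + F2, add_mem hF1 hF2, max n1 n2, fun S σ hS => ?_⟩
  have := hM S
  rw [Pi.add_apply, Pi.add_apply, ← h1 S σ (le_trans (le_max_left _ _) hS),
    ← h2 S σ (le_trans (le_max_right _ _) hS)]
  refine trace_exact (A := N.carrier S) (C := M.V S ⧸ N.carrier S) (N.carrier S).subtype
    (N.carrier S).mkQ ?_ ?_ ?_ ?_ _ _ _ ?_ ?_
  · intro x hx; exact Subtype.ext hx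
  · exact Submodule.mkQ_surjective _
  · intro x; simp
  · intro y hy; exact ⟨⟨y, by simpa using hy⟩, rfl⟩
  · intro x; rfl
  · intro x; rfl

theorem FD.sub {M : FIM} (hM : FD M) (N : Sub M) : FD N.sub := fun S => by
  have := hM S
  exact inferInstanceAs (FiniteDimensional ℂ (N.carrier S))

theorem FD.quot {M : FIM} (hM : FD M) (N : Sub M) : FD N.quot := fun S => by
  have := hM S
  exact inferInstanceAs (FiniteDimensional ℂ (M.V S ⧸ N.carrier S))

theorem FD.shift {M : FIM} (hM : FD M) (a : ℕ) : FD (shift M a) := fun S => hM (addA S a)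

/-- low of low -/
theorem low_low (M : FIM) (d : ℕ) (S : FIObj) : (low (low M d).sub d).carrier S = ⊤ := by
  rw [eq_top_iff]
  rintro ⟨x, hx⟩ -
  have key : ∀ x ∈ (low M d).carrier S, ∀ hx : x ∈ (low M d).carrier S,
      (⟨x, hx⟩ : (low M d).carrier S) ∈ (low (low M d).sub d).carrier S := by
    intro x hx
    refine Submodule.span_induction (p := fun x _ => ∀ hx : x ∈ (low M d).carrier S,
      (⟨x, hx⟩ : (low M d).carrier S) ∈ (low (low M d).sub d).carrier S) ?_ ?_ ?_ ?_ hx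
    · rintro x ⟨T, f, y, hT, rfl⟩ hx
      exact Submodule.subset_span ⟨T, f, ⟨y, Submodule.subset_span ⟨T, 𝟙 T, y, hT, M.act_id _ _⟩⟩, hT, rfl⟩
    · intro _; exact zero_mem _
    · intro x y hx hy h1 h2 _
      exact add_mem (h1 hx) (h2 hy)
    · intro c x hx h _
      exact Submodule.smul_mem _ c (h hx)
  exact key x hx hx

/-- criterion -/
theorem mem_low_shift (M : FIM) (d a : ℕ) {S T : FIObj} (h : T ⟶ addA S a) (z : M.V T)
    (hc : Nat.card {t : T.α // ∃ s : S.α, h.1 t = Sum.inl s} < d) :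
    M.act h z ∈ (low (shift M a) d).carrier S := by
  classical
  let R : FIObj := ⟨{t : T.α // ∃ s : S.α, h.1 t = Sum.inl s}, Fintype.ofFinite _⟩
  have hR : crd R < d := by
    rw [Nat.card_eq_fintype_card] at hc
    convert hc
  let f : R ⟶ S := ⟨fun t => t.2.choose, fun t u htu => by
    apply Subtype.ext; apply h.2
    rw [t.2.choose_spec, u.2.choose_spec]; exact congrArg _ htu⟩
  have hf : ∀ t : R.α, h.1 t.1 = Sum.inl (f.1 t) := fun t => t.2.choose_spec
  have hrex : ∀ t : T.α, ∃ u : R.α ⊕ Fin a, (Sum.map f.1 id u : S.α ⊕ Fin a) = h.1 t := by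
    intro t
    rcases hht : (h.1 t : S.α ⊕ Fin a) with s | j
    · exact ⟨Sum.inl ⟨t, s, hht⟩, (hf ⟨t, s, hht⟩).symm.trans hht⟩
    · exact ⟨Sum.inr j, rfl⟩
  choose r hr using hrex
  let g : T ⟶ addA R a := ⟨r, fun t u htu => h.2 (by rw [← hr, ← hr, htu])⟩
  have : h = g ≫ sumMap f a := hom_ext (fun t => (hr t).symm)
  rw [this, M.act_comp]
  exact Submodule.subset_span ⟨R, f, M.act g z, hR, rfl⟩
section free
variable (Q : FIM) (D : FIObj)

theorem precomp_bij {S : FIObj} (π : D ⟶ D) : Function.Bijective (fun g : D ⟶ S => π ≫ g) := by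
  rw [← Finite.injective_iff_bijective]
  intro g g' h
  have hs : Function.Surjective π.1 := Finite.injective_iff_surjective.1 π.2
  refine hom_ext fun x => ?_
  obtain ⟨y, rfl⟩ := hs x
  exact congrFun (congrArg Subtype.val h) y

noncomputable def Phi (S : FIObj) : ((D ⟶ S) → Q.V D) →ₗ[ℂ] Q.V S :=
  ∑ g : D ⟶ S, Q.act g ∘ₗ LinearMap.proj g

theorem Phi_apply (S : FIObj) (y : (D ⟶ S) → Q.V D) : Phi Q D S y = ∑ g, Q.act g (y g) := by
  simp [Phi]

noncomputable def avg (S : FIObj) : ((D ⟶ S) → Q.V D) →ₗ[ℂ] ((D ⟶ S) → Q.V D) :=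
  (Fintype.card (D ⟶ D) : ℂ)⁻¹ • LinearMap.pi (fun g => ∑ π : D ⟶ D, Q.act π ∘ₗ LinearMap.proj (π ≫ g))

theorem avg_apply (S : FIObj) (y : (D ⟶ S) → Q.V D) (g : D ⟶ S) :
    avg Q D S y g = (Fintype.card (D ⟶ D) : ℂ)⁻¹ • ∑ π : D ⟶ D, Q.act π (y (π ≫ g)) := by
  simp [avg]

theorem Phi_avg (S : FIObj) (y : (D ⟶ S) → Q.V D) : Phi Q D S (avg Q D S y) = Phi Q D S y := by
  rw [Phi_apply, Phi_apply]
  simp only [avg_apply, map_smul, map_sum]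
  rw [← Finset.smul_sum, Finset.sum_comm]
  have : ∀ π : D ⟶ D, ∑ g : D ⟶ S, Q.act g (Q.act π (y (π ≫ g))) = ∑ g : D ⟶ S, Q.act g (y g) := by
    intro π
    simp only [← Q.act_comp]
    exact Function.Bijective.sum_comp (precomp_bij D π) (fun g => Q.act g (y g))
  simp only [this, Finset.sum_const, Finset.card_univ]
  rw [← Nat.cast_smul_eq_nsmul ℂ, smul_smul, inv_mul_cancel₀, one_smul]
  have : Nonempty (D ⟶ D) := ⟨𝟙 D⟩
  exact_mod_cast Fintype.card_ne_zero

noncomputable def cnt (A : FIObj) (τ : A ⟶ A) : ∀ S : FIObj, (S ⟶ S) → ℂ :=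
  fun S σ => (Nat.card {g : A ⟶ S // τ ≫ g = g ≫ σ} : ℂ)

variable (hs : ∀ (S : FIObj) (x : Q.V S), ∃ y, Phi Q D S y = x)
  (hk : ∀ (S : FIObj) (y : (D ⟶ S) → Q.V D), Phi Q D S y = 0 →
    ∀ g₀ : D ⟶ S, ∑ π : D ⟶ D, Q.act π (y (π ≫ g₀)) = 0)

include hs hk

theorem free_inj : Inj Q := by
  classical
  refine ⟨0, fun S T f _ x hx => ?_⟩
  obtain ⟨y, rfl⟩ := hs S x
  have hinj : ∀ g g' : D ⟶ S, g ≫ f = g' ≫ f → g = g' := fun g g' h =>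
    hom_ext fun x => f.2 (congrFun (congrArg Subtype.val h) x)
  let y' : (D ⟶ T) → Q.V D := fun g' => ∑ g : D ⟶ S, if g' = g ≫ f then y g else 0
  have hy' : ∀ g, y' (g ≫ f) = y g := by
    intro g
    simp only [y']
    rw [Finset.sum_eq_single g]
    · simp
    · intro b _ hb
      rw [if_neg]; intro h; exact hb (hinj _ _ h).symm
    · simp
  have h0 : Phi Q D T y' = 0 := by
    rw [← hx, Phi_apply, Phi_apply, map_sum]
    simp only [y', map_sum]
    rw [Finset.sum_comm]
    refine Finset.sum_congr rfl fun g _ => ?_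
    rw [Finset.sum_eq_single (g ≫ f)]
    · rw [if_pos rfl, Q.act_comp]
    · intro b _ hb; rw [if_neg hb, map_zero]
    · simp
  have h1 : avg Q D S y = 0 := by
    funext g₀
    rw [avg_apply]
    have := hk T y' h0 (g₀ ≫ f)
    simp only [← Category.assoc, hy'] at this
    rw [this, smul_zero]; rfl
  rw [← Phi_avg, h1, map_zero]

theorem free_pol (hQ : FD Q) (hc : ∀ τ : D ⟶ D, cnt D τ ∈ CP) : Pol Q := by
  classical
  refine ⟨∑ π : D ⟶ D, ((Fintype.card (D ⟶ D) : ℂ)⁻¹ * LinearMap.trace ℂ _ (Q.act π)) • cnt D π,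
    Subalgebra.sum_mem _ fun π _ => Subalgebra.smul_mem _ (hc π) _, 0, fun S σ _ => ?_⟩
  have i1 := hQ S
  have i2 := hQ D
  obtain ⟨s0, hs0⟩ := LinearMap.exists_rightInverse_of_surjective (Phi Q D S)
    (LinearMap.range_eq_top.2 (hs S))
  have hs0' : ∀ x, Phi Q D S (s0 x) = x := fun x => LinearMap.congr_fun hs0 x
  have hk' : ∀ y, avg Q D S (s0 (Phi Q D S y)) = avg Q D S y := by
    intro y
    rw [← sub_eq_zero, ← map_sub]
    funext g
    rw [avg_apply, hk S _ (by rw [map_sub, hs0', sub_self]), smul_zero]; rfl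
  let s := avg Q D S ∘ₗ s0
  have e1 : Q.act σ = ∑ g : D ⟶ S, Q.act (g ≫ σ) ∘ₗ (LinearMap.proj g ∘ₗ s) := by
    ext x
    conv_lhs => rw [← hs0' x, ← Phi_avg, Phi_apply, map_sum]
    simp only [LinearMap.sum_apply, LinearMap.comp_apply, Q.act_comp, s, LinearMap.proj_apply]
  have e2 : ∀ g : D ⟶ S, (LinearMap.proj g ∘ₗ s) ∘ₗ Q.act (g ≫ σ) =
      ∑ π : D ⟶ D, if π ≫ g = g ≫ σ then (Fintype.card (D ⟶ D) : ℂ)⁻¹ • Q.act π else 0 := by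
    intro g
    ext w
    have hw : Q.act (g ≫ σ) w = Phi Q D S (Pi.single (g ≫ σ) w) := by
      rw [Phi_apply, Finset.sum_eq_single (g ≫ σ)]
      · rw [Pi.single_eq_same]
      · intro b _ hb; rw [Pi.single_eq_of_ne hb, map_zero]
      · simp
    simp only [LinearMap.comp_apply, s, LinearMap.proj_apply]
    rw [hw, hk', avg_apply, Finset.smul_sum, LinearMap.sum_apply]
    refine Finset.sum_congr rfl fun π _ => ?_
    split_ifs with h
    · rw [h, Pi.single_eq_same]; rfl
    · rw [Pi.single_eq_of_ne h, map_zero, smul_zero]; rfl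
  rw [e1, map_sum]
  have e3 : ∀ g : D ⟶ S, LinearMap.trace ℂ _ (Q.act (g ≫ σ) ∘ₗ (LinearMap.proj g ∘ₗ s)) =
      ∑ π : D ⟶ D, if π ≫ g = g ≫ σ then
        (Fintype.card (D ⟶ D) : ℂ)⁻¹ * LinearMap.trace ℂ _ (Q.act π) else 0 := by
    intro g
    rw [LinearMap.trace_comp_comm', e2, map_sum]
    refine Finset.sum_congr rfl fun π _ => ?_
    split_ifs
    · rw [map_smul, smul_eq_mul]
    · rw [map_zero]
  simp only [e3]
  rw [Finset.sum_comm, Finset.sum_apply, Finset.sum_apply]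
  refine Finset.sum_congr rfl fun π _ => ?_
  rw [Pi.smul_apply, Pi.smul_apply, smul_eq_mul, ← Finset.sum_filter, Finset.sum_const, nsmul_eq_mul,
    mul_comm, cnt, Nat.card_eq_fintype_card, Fintype.card_subtype]

end free
section count

theorem mp_pos {α : Type} [Finite α] {f : α → α} (hf : Function.Injective f) (x : α) :
    0 < Function.minimalPeriod f x :=
  Function.minimalPeriod_pos_of_mem_periodicPts (hf.mem_periodicPts x)

theorem iter_iff {α : Type} [Finite α] {f : α → α} (hf : Function.Injective f) (x : α) (i j : ℕ) :
    f^[i] x = f^[j] x ↔ i % Function.minimalPeriod f x = j % Function.minimalPeriod f x := by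
  have hp := mp_pos hf x
  rw [← Function.iterate_mod_minimalPeriod_eq (n := i), ← Function.iterate_mod_minimalPeriod_eq (n := j)]
  exact Function.iterate_eq_iterate_iff_of_lt_minimalPeriod (Nat.mod_lt _ hp) (Nat.mod_lt _ hp)

theorem iter_map {α β : Type} {f : α → α} {h : β → β} {g : α → β}
    (hc : ∀ x, g (f x) = h (g x)) (n : ℕ) (x : α) : g (f^[n] x) = h^[n] (g x) :=
  (Function.Semiconj.iterate_right (f := g) (ga := f) (gb := h) hc n) x

theorem mp_map {α β : Type} {f : α → α} {h : β → β} {g : α → β} (hg : Function.Injective g)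
    (hc : ∀ x, g (f x) = h (g x)) (x : α) :
    Function.minimalPeriod h (g x) = Function.minimalPeriod f x := by
  rw [Function.minimalPeriod_eq_minimalPeriod_iff]
  intro n
  rw [Function.IsPeriodicPt, Function.IsPeriodicPt, Function.IsFixedPt, Function.IsFixedPt,
    ← iter_map hc, hg.eq_iff]

theorem eqv_apply {A S : FIObj} {τ : A ⟶ A} {σ : S ⟶ S} {g : A ⟶ S} (h : τ ≫ g = g ≫ σ) (x : A.α) :
    g.1 (τ.1 x) = σ.1 (g.1 x) := congrFun (congrArg Subtype.val h) x

theorem cnt_mem (n : ℕ) : ∀ (A : FIObj) (τ : A ⟶ A), crd A = n → cnt A τ ∈ CP := by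
  classical
  induction n using Nat.strong_induction_on with
  | _ n ih =>
  intro A τ hA
  rcases isEmpty_or_nonempty A.α with hE | ⟨⟨a⟩⟩
  · have : cnt A τ = 1 := by
      funext S σ
      have hu : Nat.card {g : A ⟶ S // τ ≫ g = g ≫ σ} = 1 := by
        rw [Nat.card_eq_one_iff_unique]
        refine ⟨⟨fun g h => Subtype.ext (hom_ext fun x => isEmptyElim x)⟩,
          ⟨⟨⟨fun x => isEmptyElim x, fun x => isEmptyElim x⟩, hom_ext fun x => isEmptyElim x⟩⟩⟩
      rw [cnt, hu]; simp
    rw [this]; exact one_mem _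
  set l := Function.minimalPeriod τ.1 a with hl
  have hlpos : 0 < l := mp_pos τ.2 a
  let O : A.α → Prop := fun x => ∃ j, τ.1^[j] a = x
  have hO : ∀ x, O (τ.1 x) → O x := by
    rintro x ⟨j, hj⟩
    rcases j with _ | j
    · refine ⟨l - 1, τ.2 ?_⟩
      rw [← hj, ← Function.iterate_succ_apply' τ.1, Nat.succ_eq_add_one, Nat.sub_add_cancel hlpos]
      exact Function.iterate_minimalPeriod
    · refine ⟨j, τ.2 ?_⟩
      rw [← hj, ← Function.iterate_succ_apply' τ.1]
  have hOa : O a := ⟨0, rfl⟩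
  let A' : FIObj := ⟨{x : A.α // ¬ O x}, Fintype.ofFinite _⟩
  let τ' : A' ⟶ A' := ⟨fun x => ⟨τ.1 x.1, fun h => x.2 (hO _ h)⟩,
    fun x y h => Subtype.ext (τ.2 (congrArg Subtype.val h))⟩
  let ι : A' ⟶ A := ⟨Subtype.val, Subtype.val_injective⟩
  have hι : τ' ≫ ι = ι ≫ τ := rfl
  have hlt : crd A' < n := by
    rw [← hA]
    refine @Fintype.card_lt_of_injective_of_notMem A'.α A.α A'.fin A.fin ι.1 ι.2 a ?_
    rintro ⟨x, hx⟩
    have hx' : x.1 = a := hx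
    exact x.2 (by rw [hx']; exact hOa)
  have main : cnt A τ = cnt A' τ' *
      (pp l - algebraMap ℂ _ (Nat.card {x : A'.α // Function.minimalPeriod τ'.1 x = l} : ℂ)) := by
    funext S σ
    have step1 : Nat.card {g : A ⟶ S // τ ≫ g = g ≫ σ} =
        Nat.card {p : {g : A' ⟶ S // τ' ≫ g = g ≫ σ} × S.α //
          Function.minimalPeriod σ.1 p.2 = l ∧ ∀ x, p.1.1.1 x ≠ p.2} := by
      let F : {g : A ⟶ S // τ ≫ g = g ≫ σ} → {p : {g : A' ⟶ S // τ' ≫ g = g ≫ σ} × S.α //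
          Function.minimalPeriod σ.1 p.2 = l ∧ ∀ x, p.1.1.1 x ≠ p.2} := fun g =>
        ⟨(⟨ι ≫ g.1, by rw [← Category.assoc, hι, Category.assoc, g.2, Category.assoc]⟩, g.1.1 a),
          mp_map g.1.2 (eqv_apply g.2) a, fun x hx => x.2 (by
            have : x.1 = a := g.1.2 hx
            rw [this]; exact hOa)⟩
      refine Nat.card_eq_of_bijective F ⟨?_, ?_⟩
      · rintro ⟨g, hg⟩ ⟨h, hh⟩ hF
        have h1 : ι ≫ g = ι ≫ h := congrArg (fun p => p.1.1.1) hF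
        have h2 : g.1 a = h.1 a := congrArg (fun p => p.1.2) hF
        refine Subtype.ext (hom_ext fun x => ?_)
        by_cases hx : O x
        · obtain ⟨j, rfl⟩ := hx
          show g.1 _ = h.1 _
          rw [iter_map (eqv_apply hg), iter_map (eqv_apply hh), h2]
        · exact congrFun (congrArg Subtype.val h1) ⟨x, hx⟩
      · rintro ⟨⟨⟨g', hg'⟩, b⟩, hb, hb'⟩
        dsimp only at hb hb'
        let G : A.α → S.α := fun x => if h : O x then σ.1^[h.choose] b else g'.1 ⟨x, h⟩
        have hG1 : ∀ j, G (τ.1^[j] a) = σ.1^[j] b := by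
          intro j
          have h : O (τ.1^[j] a) := ⟨j, rfl⟩
          simp only [G, dif_pos h]
          have := h.choose_spec
          rw [iter_iff τ.2] at this
          rw [iter_iff σ.2, hb]
          exact this
        have hG2 : ∀ x (h : ¬ O x), G x = g'.1 ⟨x, h⟩ := fun x h => dif_neg h
        have hdis : ∀ j x, σ.1^[j] b ≠ g'.1 x := by
          intro j x hx
          -- apply σ enough times to return to b
          have hmul : (σ.1^[l * j - j]) (σ.1^[j] b) = b := by
            rw [← Function.iterate_add_apply, Nat.sub_add_cancel (Nat.le_mul_of_pos_left _ hlpos)]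
            have : σ.1^[l * j] b = σ.1^[0] b := by rw [iter_iff σ.2, hb]; simp
            exact this
          rw [hx, ← iter_map (eqv_apply hg')] at hmul
          exact hb' _ hmul
        have hGinj : Function.Injective G := by
          intro x y hxy
          by_cases hx : O x <;> by_cases hy : O y
          · obtain ⟨i, rfl⟩ := hx
            obtain ⟨j, rfl⟩ := hy
            rw [hG1, hG1, iter_iff σ.2, hb] at hxy
            rw [iter_iff τ.2]; exact hxy
          · obtain ⟨i, rfl⟩ := hx
            rw [hG1, hG2 y hy] at hxy
            exact absurd hxy (hdis _ _)
          · obtain ⟨i, rfl⟩ := hy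
            rw [hG1, hG2 x hx] at hxy
            exact absurd hxy.symm (hdis _ _)
          · rw [hG2 x hx, hG2 y hy] at hxy
            exact congrArg Subtype.val (g'.2 hxy)
        refine ⟨⟨⟨G, hGinj⟩, ?_⟩, ?_⟩
        · refine hom_ext fun x => ?_
          show G (τ.1 x) = σ.1 (G x)
          by_cases hx : O x
          · obtain ⟨i, rfl⟩ := hx
            rw [← Function.iterate_succ_apply' τ.1, hG1, hG1, Function.iterate_succ_apply']
          · rw [hG2 x hx, hG2 _ (fun h => hx (hO _ h))]
            exact eqv_apply hg' ⟨x, hx⟩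
        · apply Subtype.ext
          refine Prod.ext (Subtype.ext (hom_ext fun x => hG2 x.1 x.2)) (hG1 0)
    have step2 : ∀ g : {g : A' ⟶ S // τ' ≫ g = g ≫ σ},
        Nat.card {b : S.α // Function.minimalPeriod σ.1 b = l ∧ ∀ x, g.1.1 x ≠ b} +
          Nat.card {x : A'.α // Function.minimalPeriod τ'.1 x = l} =
          Nat.card {b : S.α // Function.minimalPeriod σ.1 b = l} := by
      rintro ⟨g, hg⟩
      rw [← Nat.card_sum]
      have hmp : ∀ x, Function.minimalPeriod σ.1 (g.1 x) = Function.minimalPeriod τ'.1 x :=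
        mp_map g.2 (eqv_apply hg)
      let F : {b : S.α // Function.minimalPeriod σ.1 b = l ∧ ∀ x, g.1 x ≠ b} ⊕
        {x : A'.α // Function.minimalPeriod τ'.1 x = l} → {b : S.α // Function.minimalPeriod σ.1 b = l} :=
        Sum.elim (fun b => ⟨b.1, b.2.1⟩) (fun x => ⟨g.1 x.1, by rw [hmp, x.2]⟩)
      refine Nat.card_eq_of_bijective F ⟨?_, ?_⟩
      · rintro (x | x) (y | y) hxy
        · exact congrArg Sum.inl (Subtype.ext (congrArg Subtype.val hxy :))
        · exact absurd (congrArg Subtype.val hxy).symm (x.2.2 y.1)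
        · exact absurd (congrArg Subtype.val hxy) (y.2.2 x.1)
        · exact congrArg Sum.inr (Subtype.ext (g.2 (congrArg Subtype.val hxy :)))
      · rintro ⟨b, hb⟩
        by_cases h : ∃ x, g.1 x = b
        · obtain ⟨x, rfl⟩ := h
          exact ⟨Sum.inr ⟨x, by rw [← hmp, hb]⟩, rfl⟩
        · push Not at h
          exact ⟨Sum.inl ⟨b, hb, h⟩, rfl⟩
    have step3 := Nat.card_congr (Equiv.subtypeProdEquivSigmaSubtype
      (fun (g : {g : A' ⟶ S // τ' ≫ g = g ≫ σ}) (b : S.α) =>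
        Function.minimalPeriod σ.1 b = l ∧ ∀ x, g.1.1 x ≠ b))
    rw [Nat.card_sigma] at step3
    show ((Nat.card {g : A ⟶ S // τ ≫ g = g ≫ σ} : ℕ) : ℂ) = (Nat.card {g : A' ⟶ S // τ' ≫ g = g ≫ σ} : ℂ) *
      ((Nat.card {b : S.α // Function.minimalPeriod σ.1 b = l} : ℂ) -
        (Nat.card {x : A'.α // Function.minimalPeriod τ'.1 x = l} : ℂ))
    rw [step1, step3, Nat.cast_sum]
    have : ∀ g : {g : A' ⟶ S // τ' ≫ g = g ≫ σ},
        (Nat.card {b : S.α // Function.minimalPeriod σ.1 b = l ∧ ∀ x, g.1.1 x ≠ b} : ℂ) =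
        ((Nat.card {b : S.α // Function.minimalPeriod σ.1 b = l} : ℂ) -
        (Nat.card {x : A'.α // Function.minimalPeriod τ'.1 x = l} : ℂ)) := fun g => by
      rw [← step2 g]; push_cast; ring
    rw [Finset.sum_congr rfl fun g _ => this g, Finset.sum_const, nsmul_eq_mul, Finset.card_univ,
      Nat.card_eq_fintype_card (α := {g : A' ⟶ S // τ' ≫ g = g ≫ σ})]
  rw [main]
  refine mul_mem (ih _ hlt A' τ' rfl) (sub_mem ?_ (Subalgebra.algebraMap_mem _ _))
  exact Algebra.subset_adjoin ⟨l - 1, congrArg pp (Nat.sub_add_cancel hlpos)⟩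

end count
section main

theorem inl_nat {S T : FIObj} (f : S ⟶ T) (a : ℕ) : f ≫ inl T a = inl S a ≫ sumMap f a := rfl

theorem low_transport (M : FIM) (d : ℕ) {S T : FIObj} {a b : ℕ} (θ : addA S a ⟶ addA T b)
    (hθ : ∀ j : Fin a, ∃ k : Fin b, θ.1 (Sum.inr j) = Sum.inr k) (x : M.V (addA S a))
    (hx : x ∈ (low (shift M a) d).carrier S) : M.act θ x ∈ (low (shift M b) d).carrier T := by
  revert x
  change (low (shift M a) d).carrier S ≤ ((low (shift M b) d).carrier T).comap (M.act θ)
  refine Submodule.span_le.2 ?_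
  rintro x ⟨R, f, y, hR, rfl⟩
  show M.act θ (M.act (sumMap f a) y) ∈ (low (shift M b) d).carrier T
  rw [← M.act_comp]
  apply mem_low_shift
  refine lt_of_le_of_lt ?_ hR
  rw [crd, ← Nat.card_eq_fintype_card]
  have hex : ∀ t : {t : (addA R a).α // ∃ s : T.α, (sumMap f a ≫ θ).1 t = Sum.inl s},
      ∃ r : R.α, t.1 = Sum.inl r := by
    rintro ⟨t | t, s, hs⟩
    · exact ⟨t, rfl⟩
    · obtain ⟨k, hk⟩ := hθ t
      exact absurd (hk.symm.trans hs) (by simp)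
  choose r hr using hex
  exact Nat.card_le_card_of_injective r fun t u h => Subtype.ext (by rw [hr, hr, h])

theorem exists_inv {S T : FIObj} (f : S ⟶ T) (hf : Function.Surjective f.1) :
    ∃ g : T ⟶ S, f ≫ g = 𝟙 S ∧ g ≫ f = 𝟙 T := by
  let e := Equiv.ofBijective f.1 ⟨f.2, hf⟩
  exact ⟨⟨e.symm, e.symm.injective⟩, hom_ext fun x => e.symm_apply_apply x,
    hom_ext fun x => e.apply_symm_apply x⟩

theorem gen_shift (M : FIM) (d : ℕ) (hM : ∀ S, (low M (d + 1)).carrier S = ⊤) (a : ℕ) (S : FIObj)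
    (v : M.V (addA S a)) : ∃ l ∈ (low (shift M a) d).carrier S, ∃ w : M.V S,
      v = l + M.act (inl S a) w := by
  suffices h : v ∈ (low (shift M a) d).carrier S ⊔ LinearMap.range (M.act (inl S a)) by
    obtain ⟨l, hl, z, ⟨w, rfl⟩, rfl⟩ := Submodule.mem_sup.1 h
    exact ⟨l, hl, w, rfl⟩
  have hv : v ∈ (low M (d + 1)).carrier (addA S a) := by rw [hM]; trivial
  revert v
  intro v hv
  refine (Submodule.span_le (p := (low (shift M a) d).carrier S ⊔
    LinearMap.range (M.act (inl S a)))).2 ?_ hv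
  rintro x ⟨R, f, y, hR, rfl⟩
  by_cases h : ∀ t, ∃ s : S.α, f.1 t = Sum.inl s
  · choose f0 hf0 using h
    let g : R ⟶ S := ⟨f0, fun t u h => f.2 (by rw [hf0, hf0, h])⟩
    have : f = g ≫ inl S a := hom_ext hf0
    rw [this, M.act_comp]
    exact Submodule.mem_sup_right ⟨_, rfl⟩
  · refine Submodule.mem_sup_left (mem_low_shift M d a f y ?_)
    push Not at h
    obtain ⟨t, ht⟩ := h
    have : Nat.card {t : R.α // ∃ s : S.α, f.1 t = Sum.inl s} < Nat.card R.α := by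
      refine Finite.card_subtype_lt (x := t) ?_
      push Not; exact ht
    rw [Nat.card_eq_fintype_card (α := R.α)] at this
    unfold crd at hR
    omega

theorem low_quot {V : FIM} (N : Sub V) (d : ℕ) (S : FIObj) (x : V.V S)
    (hx : x ∈ (low V d).carrier S) :
    (Submodule.Quotient.mk x : V.V S ⧸ N.carrier S) ∈ (low N.quot d).carrier S := by
  revert x
  change (low V d).carrier S ≤ Submodule.comap (N.carrier S).mkQ ((low N.quot d).carrier S)
  refine Submodule.span_le.2 ?_
  rintro x ⟨R, f, y, hR, rfl⟩
  exact Submodule.subset_span ⟨R, f, Submodule.Quotient.mk y, hR, rfl⟩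

def imSub (M : FIM) (a : ℕ) : Sub (shift M a) where
  carrier S := LinearMap.range (M.act (inl S a))
  map_mem := by
    rintro S T f x ⟨w, rfl⟩
    refine ⟨M.act f w, ?_⟩
    rw [← M.act_comp, inl_nat, M.act_comp]

theorem Phi_single (Q : FIM) (D S : FIObj) [DecidableEq (D ⟶ S)] (g : D ⟶ S) (w : Q.V D) :
    Phi Q D S (Pi.single g w) = Q.act g w := by
  rw [Phi_apply, Finset.sum_eq_single g]
  · rw [Pi.single_eq_same]
  · intro b _ hb; rw [Pi.single_eq_of_ne hb, map_zero]
  · simp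

/-- splitting off a points -/
theorem exists_split (S : FIObj) (a : ℕ) (e : Fin a → S.α) (he : Function.Injective e) :
    ∃ (S0 : FIObj) (α : addA S0 a ⟶ S), Function.Surjective α.1 ∧ ∀ j, α.1 (Sum.inr j) = e j := by
  classical
  let S0 : FIObj := ⟨{s : S.α // ¬ ∃ j, e j = s}, Fintype.ofFinite _⟩
  refine ⟨S0, ⟨Sum.elim Subtype.val e, ?_⟩, ?_, fun j => rfl⟩
  · rintro (x | x) (y | y) h
    · exact congrArg Sum.inl (Subtype.ext h)
    · exact absurd ⟨y, Eq.symm h⟩ x.2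
    · exact absurd ⟨x, h⟩ y.2
    · exact congrArg Sum.inr (he h)
  · intro s
    by_cases h : ∃ j, e j = s
    · obtain ⟨j, rfl⟩ := h
      exact ⟨Sum.inr j, rfl⟩
    · exact ⟨Sum.inl ⟨s, h⟩, rfl⟩

theorem inj_of_shift (M : FIM) (a : ℕ) (h : Inj (shift M a)) : Inj M := by
  obtain ⟨N, h⟩ := h
  refine ⟨N + a, fun S T f hS x hx => ?_⟩
  obtain ⟨e⟩ : Nonempty (Fin a ↪ S.α) := by
    apply Function.Embedding.nonempty_of_card_le
    rw [Fintype.card_fin]; unfold crd at hS; omega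
  obtain ⟨S0, α, hα, hα'⟩ := exists_split S a e e.injective
  obtain ⟨T0, β, hβ, hβ'⟩ := exists_split T a (f.1 ∘ e) (f.2.comp e.injective)
  obtain ⟨α', ha1, ha2⟩ := exists_inv α hα
  obtain ⟨β', hb1, hb2⟩ := exists_inv β hβ
  have hex : ∀ s : S0.α, ∃ t : T0.α, f.1 (α.1 (Sum.inl s)) = β.1 (Sum.inl t) := by
    intro s
    obtain ⟨t | j, ht⟩ := hβ (f.1 (α.1 (Sum.inl s)))
    · exact ⟨t, ht.symm⟩
    · rw [hβ' j] at ht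
      have := f.2 ht
      rw [← hα' j] at this
      exact absurd (α.2 this) (by simp)
  choose f0 hf0 using hex
  let g : S0 ⟶ T0 := ⟨f0, fun s t hst => by
    have h1 := f.2 ((hf0 s).trans ((congrArg (fun z => β.1 (Sum.inl z)) hst).trans (hf0 t).symm))
    exact Sum.inl_injective (α.2 h1)⟩
  have hcomm : α ≫ f = sumMap g a ≫ β := by
    refine hom_ext fun z => ?_
    rcases z with s | j
    · exact hf0 s
    · show f.1 (α.1 (Sum.inr j)) = β.1 (Sum.inr j)
      rw [hα', hβ']; rfl
  have hcard : N ≤ crd S0 := by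
    have : crd S ≤ crd (addA S0 a) := Fintype.card_le_of_surjective α.1 hα
    have h2 : crd (addA S0 a) = crd S0 + a := by
      rw [crd, crd, ← Nat.card_eq_fintype_card, ← Nat.card_eq_fintype_card]
      show Nat.card (S0.α ⊕ Fin a) = _
      rw [Nat.card_sum, Nat.card_eq_fintype_card (α := Fin a), Fintype.card_fin]
    omega
  have hx1 : M.act α (M.act α' x) = x := by rw [← M.act_comp, ha2, M.act_id]
  have hx2 : M.act (sumMap g a) (M.act α' x) = 0 := by
    have h3 : M.act β (M.act (sumMap g a) (M.act α' x)) = 0 := by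
      rw [← M.act_comp, ← hcomm, M.act_comp, hx1, hx]
    have h4 := congrArg (M.act β') h3
    rwa [← M.act_comp, hb1, M.act_id, map_zero] at h4
  have hx3 := h S0 T0 g hcard (M.act α' x) hx2
  rw [← hx1]
  erw [hx3]
  exact map_zero _

theorem main_ind (d : ℕ) : ∀ M : FIM, FD M → (∀ S, (low M d).carrier S = ⊤) → Inj M ∧ Pol M := by
  classical
  induction d with
  | zero =>
    intro M hM hlow
    have h0 : ∀ S (x : M.V S), x = 0 := by
      intro S x
      have hx : x ∈ (low M 0).carrier S := by rw [hlow]; trivial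
      have : (low M 0).carrier S ≤ ⊥ := Submodule.span_le.2 (by
        rintro x ⟨R, f, y, hR, rfl⟩; exact absurd hR (Nat.not_lt_zero _))
      exact (Submodule.mem_bot ℂ).1 (this hx)
    refine ⟨⟨0, fun S T f _ x _ => h0 S x⟩, 0, zero_mem _, 0, fun S σ _ => ?_⟩
    have : M.act σ = 0 := LinearMap.ext fun x => h0 _ _
    rw [this, map_zero]; rfl
  | succ d ih =>
    intro M hM hlow
    let D : FIObj := FIObj.of (Fin d)
    have hD : crd D = d := Fintype.card_fin d
    let K : ℕ →o Submodule ℂ (M.V D) :=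
      ⟨fun a => ((low (shift M a) d).carrier D).comap (M.act (inl D a)), by
        intro a b hab x hx
        let θ : addA D a ⟶ addA D b := ⟨Sum.map id (Fin.castLE hab),
          Function.Injective.sumMap Function.injective_id (Fin.castLE_injective hab)⟩
        have := low_transport M d θ (fun j => ⟨_, rfl⟩) _ hx
        rw [← M.act_comp] at this
        exact this⟩
    have := hM D
    obtain ⟨a, ha⟩ := monotone_stabilizes_iff_noetherian.2
      (inferInstanceAs (IsNoetherian ℂ (M.V D))) K
    have hV : FD (shift M a) := hM.shift a
    let L := low (shift M a) d
    have hgen := gen_shift M d hlow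
    have hs : ∀ (S : FIObj) (x : L.quot.V S), ∃ y, Phi L.quot D S y = x := by
      intro S x
      obtain ⟨v, rfl⟩ := Submodule.Quotient.mk_surjective (L.carrier S) x
      suffices h : ∀ w : M.V S, (Submodule.Quotient.mk (M.act (inl S a) w) :
          (shift M a).V S ⧸ L.carrier S) ∈ LinearMap.range (Phi L.quot D S) by
        obtain ⟨l, hl, w, rfl⟩ := hgen a S v
        have h2 : (Submodule.Quotient.mk (l + M.act (inl S a) w) :
          (shift M a).V S ⧸ L.carrier S) = Submodule.Quotient.mk (M.act (inl S a) w) := by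
          rw [Submodule.Quotient.eq]
          simpa using hl
        obtain ⟨y, hy⟩ := h w
        exact ⟨y, hy.trans h2.symm⟩
      intro w
      have hw : w ∈ (low M (d + 1)).carrier S := by rw [hlow]; trivial
      revert w
      change (low M (d + 1)).carrier S ≤ (LinearMap.range (Phi L.quot D S)).comap
        ((L.carrier S).mkQ ∘ₗ M.act (inl S a))
      refine Submodule.span_le.2 ?_
      rintro x ⟨R, f, y, hR, rfl⟩
      show (Submodule.Quotient.mk (M.act (inl S a) (M.act f y)) :
          (shift M a).V S ⧸ L.carrier S) ∈ LinearMap.range (Phi L.quot D S)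
      rw [← M.act_comp]
      by_cases hRd : crd R < d
      · have : M.act (f ≫ inl S a) y ∈ L.carrier S := by
          apply mem_low_shift
          refine lt_of_le_of_lt ?_ hRd
          rw [crd, ← Nat.card_eq_fintype_card]
          exact Finite.card_subtype_le _
        rw [(Submodule.Quotient.mk_eq_zero _).2 this]
        exact zero_mem _
      · have hRd' : crd R = d := by omega
        let e := Fintype.equivFinOfCardEq hRd'
        let h1 : R ⟶ D := ⟨e, e.injective⟩
        let h2 : D ⟶ R := ⟨e.symm, e.symm.injective⟩
        have hf : f ≫ inl S a = h1 ≫ (inl D a ≫ sumMap (h2 ≫ f) a) := by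
          refine hom_ext fun x => ?_
          show Sum.inl (f.1 x) = Sum.inl (f.1 (e.symm (e x)))
          rw [e.symm_apply_apply]
        rw [hf, M.act_comp, M.act_comp]
        refine ⟨Pi.single (h2 ≫ f) (Submodule.Quotient.mk (M.act (inl D a) (M.act h1 y))), ?_⟩
        rw [Phi_single]; rfl
    have hk : ∀ (S : FIObj) (y : (D ⟶ S) → L.quot.V D), Phi L.quot D S y = 0 →
        ∀ g₀ : D ⟶ S, ∑ π : D ⟶ D, L.quot.act π (y (π ≫ g₀)) = 0 := by
      intro S y hy g₀
      have hw : ∀ g, ∃ w : M.V D, y g = (L.carrier D).mkQ (M.act (inl D a) w) := by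
        intro g
        obtain ⟨v, hv⟩ := Submodule.Quotient.mk_surjective (L.carrier D) (y g)
        obtain ⟨l, hl, w, rfl⟩ := hgen a D v
        refine ⟨w, ?_⟩
        rw [← hv]
        refine (Submodule.Quotient.eq _).2 ?_
        simpa using hl
      choose w hw using hw
      have hact : ∀ (T : FIObj) (g : D ⟶ T) (g' : D ⟶ S), L.quot.act g (y g') =
          (L.carrier T).mkQ (M.act (inl T a) (M.act g (w g'))) := by
        intro T g g'
        rw [hw, ← M.act_comp, inl_nat, M.act_comp]; rfl
      have hZ : ∑ g : D ⟶ S, M.act (inl S a) (M.act g (w g)) ∈ L.carrier S := by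
        rw [Phi_apply] at hy
        simp only [hact] at hy
        have hy2 : (L.carrier S).mkQ (∑ g : D ⟶ S, M.act (inl S a) (M.act g (w g))) = 0 :=
          (map_sum _ _ _).trans hy
        exact (Submodule.Quotient.mk_eq_zero _).1 hy2
      let P : S.α ⊕ Fin a → Prop := fun z => ∃ i : D.α, Sum.inl (g₀.1 i) = z
      let b := Fintype.card {z // ¬ P z}
      let ε : {z // ¬ P z} ≃ Fin b := Fintype.equivFin _
      have hPr : ∀ j : Fin a, ¬ P (Sum.inr j) := by rintro j ⟨i, hi⟩; simp at hi
      have hab : a ≤ b := by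
        have := Fintype.card_le_of_injective (fun j : Fin a => (⟨Sum.inr j, hPr j⟩ : {z // ¬ P z}))
          (fun i j h => Sum.inr_injective (congrArg Subtype.val h))
        rwa [Fintype.card_fin] at this
      let θf : S.α ⊕ Fin a → D.α ⊕ Fin b := fun z =>
        if h : P z then Sum.inl h.choose else Sum.inr (ε ⟨z, h⟩)
      have hθ1 : ∀ z (h : P z), θf z = Sum.inl h.choose := fun z h => dif_pos h
      have hθ2 : ∀ z (h : ¬ P z), θf z = Sum.inr (ε ⟨z, h⟩) := fun z h => dif_neg h
      have hθinj : Function.Injective θf := by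
        intro z z' hz
        by_cases h : P z <;> by_cases h' : P z'
        · rw [hθ1 z h, hθ1 z' h'] at hz
          rw [← h.choose_spec, ← h'.choose_spec, Sum.inl_injective hz]
        · rw [hθ1 z h, hθ2 z' h'] at hz; simp at hz
        · rw [hθ2 z h, hθ1 z' h'] at hz; simp at hz
        · rw [hθ2 z h, hθ2 z' h'] at hz
          exact congrArg Subtype.val (ε.injective (Sum.inr_injective hz))
      let θ : addA S a ⟶ addA D b := ⟨θf, hθinj⟩
      have hθg : g₀ ≫ inl S a ≫ θ = inl D b := by
        refine hom_ext fun i => ?_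
        show θf (Sum.inl (g₀.1 i)) = Sum.inl i
        have h : P (Sum.inl (g₀.1 i)) := ⟨i, rfl⟩
        rw [hθ1 _ h]
        exact congrArg _ (g₀.2 (Sum.inl_injective h.choose_spec))
      have hZ2 := low_transport M d θ (fun j => ⟨_, hθ2 _ (hPr j)⟩) _ hZ
      rw [map_sum] at hZ2
      simp only [← M.act_comp] at hZ2
      rw [← Finset.sum_filter_add_sum_filter_not _ (fun g => g ∈ Finset.image (fun π : D ⟶ D => π ≫ g₀) Finset.univ)] at hZ2
      have hother : ∑ g ∈ Finset.univ.filter (fun g => g ∉ Finset.image (fun π : D ⟶ D => π ≫ g₀) Finset.univ),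
          M.act ((g ≫ inl S a) ≫ θ) (w g) ∈ (low (shift M b) d).carrier D := by
        refine Submodule.sum_mem _ fun g hg => ?_
        have hg' := (Finset.mem_filter.1 hg).2
        apply mem_low_shift
        have hne : ∃ i, ¬ ∃ s : D.α, ((g ≫ inl S a) ≫ θ).1 i = Sum.inl s := by
          by_contra hcon
          push Not at hcon
          apply hg'
          have hP : ∀ i, ∃ j, g₀.1 j = g.1 i := by
            intro i
            obtain ⟨s, hs⟩ := hcon i
            by_cases h : P (Sum.inl (g.1 i))
            · obtain ⟨j, hj⟩ := h
              exact ⟨j, Sum.inl_injective hj⟩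
            · exact absurd ((hθ2 _ h).symm.trans hs) (by simp)
          choose π hπ using hP
          refine Finset.mem_image.2 ⟨⟨π, fun i j hij => g.2 (by rw [← hπ, ← hπ, hij])⟩,
            Finset.mem_univ _, hom_ext hπ⟩
        obtain ⟨i, hi⟩ := hne
        have := Finite.card_subtype_lt (p := fun i => ∃ s : D.α, ((g ≫ inl S a) ≫ θ).1 i = Sum.inl s) hi
        rwa [Nat.card_eq_fintype_card (α := D.α), show Fintype.card D.α = d from hD] at this
      have hmain := (Submodule.add_mem_iff_left _ hother).1 hZ2
      rw [Finset.filter_mem_eq_inter, Finset.univ_inter, Finset.sum_image] at hmain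
      · have hK : ∑ π : D ⟶ D, M.act π (w (π ≫ g₀)) ∈ K b := by
          change M.act (inl D b) (∑ π : D ⟶ D, M.act π (w (π ≫ g₀))) ∈ (low (shift M b) d).carrier D
          rw [map_sum]
          convert hmain using 1
          refine Finset.sum_congr rfl fun π _ => ?_
          rw [← M.act_comp]
          congr 2
          rw [Category.assoc, Category.assoc, hθg]
        rw [← ha b hab] at hK
        simp only [hact]
        have hfin : (L.carrier D).mkQ (M.act (inl D a) (∑ π : D ⟶ D, M.act π (w (π ≫ g₀)))) = 0 :=
          (Submodule.Quotient.mk_eq_zero _).2 hK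
        rw [map_sum] at hfin
        exact (map_sum _ _ _).symm.trans hfin
      · intro π _ π' _ h
        exact hom_ext fun x => g₀.2 (congrFun (congrArg Subtype.val h) x)
    have hL := ih L.sub (hV.sub L) (low_low _ d)
    have hQi := free_inj L.quot D hs hk
    have hQp := free_pol L.quot D hs hk (hV.quot L) (fun τ => cnt_mem d D τ hD)
    have hVi : Inj (shift M a) := Inj.ext L hL.1 hQi
    have hVp : Pol (shift M a) := Pol.ext hV L hL.2 hQp
    have hMi : Inj M := inj_of_shift M a hVi
    refine ⟨hMi, ?_⟩
    have hC := ih (imSub M a).quot (hV.quot _) (by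
      intro S
      rw [eq_top_iff]
      rintro x -
      obtain ⟨v, rfl⟩ := Submodule.Quotient.mk_surjective ((imSub M a).carrier S) x
      obtain ⟨l, hl, w, rfl⟩ := hgen a S v
      have h2 : (Submodule.Quotient.mk (l + M.act (inl S a) w) :
          (shift M a).V S ⧸ (imSub M a).carrier S) = Submodule.Quotient.mk l := by
        refine (Submodule.Quotient.eq _).2 ?_
        rw [add_sub_cancel_left]
        exact ⟨w, rfl⟩
      rw [h2]
      exact low_quot _ _ _ _ hl)
    obtain ⟨F1, hF1, n1, h1⟩ := hVp
    obtain ⟨F2, hF2, n2, h2⟩ := hC.2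
    obtain ⟨n3, h3⟩ := hMi
    refine ⟨F1 - F2, sub_mem hF1 hF2, n1 + n2 + n3, fun S σ hS => ?_⟩
    rw [Pi.sub_apply, Pi.sub_apply, ← h1 S σ (by omega), ← h2 S σ (by omega), eq_sub_iff_add_eq]
    symm
    have i1 := hM S
    have i2 := hV S
    have i3 := (hV.quot (imSub M a)) S
    refine trace_exact (A := M.V S) (B := (shift M a).V S) (C := (imSub M a).quot.V S)
      (M.act (inl S a)) ((imSub M a).carrier S).mkQ ?_ ?_ ?_ ?_ _ _ _ ?_ ?_
    · exact h3 S _ (inl S a) (by omega)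
    · exact Submodule.mkQ_surjective _
    · intro x
      exact (Submodule.Quotient.mk_eq_zero _).2 ⟨x, rfl⟩
    · intro y hy
      exact (Submodule.Quotient.mk_eq_zero _).1 hy
    · intro x
      show M.act (sumMap σ a) _ = _
      rw [← M.act_comp, ← M.act_comp, inl_nat]
    · intro x; rfl

end main
section final

def toFIM (M : FIMod) : FIM where
  V S := M.obj S
  act f := (M.map f).hom
  act_id S x := by rw [M.map_id]; rfl
  act_comp f g x := by rw [M.map_comp]; rfl

theorem mem_low_self (M : FIM) {d : ℕ} {S : FIObj} (h : crd S < d) (x : M.V S) :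
    x ∈ (low M d).carrier S := Submodule.subset_span ⟨S, 𝟙 _, x, h, M.act_id _ _⟩

theorem fd_of_fg (M : FIMod) (hM : FIMod.FG M) :
    FD (toFIM M) ∧ ∃ d, ∀ S, (low (toFIM M) d).carrier S = ⊤ := by
  obtain ⟨k, S, m, h⟩ := hM
  constructor
  · intro T
    let N : FISub M :=
      { carrier := fun T => Submodule.span ℂ (Set.range (fun p : Σ i, (S i ⟶ T) => M.map p.2 (m p.1)))
        map_mem := by
          intro T U f x hx
          induction hx using Submodule.span_induction with
          | mem x hx =>
            obtain ⟨⟨i, g⟩, rfl⟩ := hx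
            refine Submodule.subset_span ⟨⟨i, g ≫ f⟩, ?_⟩
            simp
          | zero => rw [map_zero]; exact zero_mem _
          | add x y _ _ hx hy => rw [map_add]; exact add_mem hx hy
          | smul c x _ hx => rw [map_smul]; exact Submodule.smul_mem _ _ hx }
    have hN := h N (fun i => Submodule.subset_span ⟨⟨i, 𝟙 _⟩, by simp⟩) T
    have hf : FiniteDimensional ℂ (N.carrier T) :=
      FiniteDimensional.span_of_finite ℂ (Set.finite_range _)
    rw [hN] at hf
    exact Module.Finite.equiv (Submodule.topEquiv (R := ℂ) (M := M.obj T))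
  · refine ⟨Finset.univ.sup (fun i => crd (S i)) + 1, ?_⟩
    let N : FISub M :=
      { carrier := fun T => (low (toFIM M) (Finset.univ.sup (fun i => crd (S i)) + 1)).carrier T
        map_mem := fun f x hx => (low (toFIM M) _).map_mem f x hx }
    exact h N fun i => mem_low_self (toFIM M)
      (Nat.lt_succ_of_le (Finset.le_sup (f := fun i => crd (S i)) (Finset.mem_univ i))) (m i)

theorem mp_perm {α : Type} [Fintype α] [DecidableEq α] (σ : Equiv.Perm α) (x : α) (hx : x ∈ σ.support) :
    Function.minimalPeriod σ x = (σ.cycleOf x).support.card := by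
  have hx' : σ x ≠ x := Equiv.Perm.mem_support.1 hx
  have hc := Equiv.Perm.isCycle_cycleOf σ hx'
  rw [← hc.orderOf, orderOf]
  rw [Function.minimalPeriod_eq_minimalPeriod_iff]
  intro n
  have h1 : Function.IsPeriodicPt (σ.cycleOf x * ·) n 1 ↔ σ.cycleOf x ^ n = 1 :=
    isPeriodicPt_mul_iff_pow_eq_one _
  rw [h1, hc.pow_eq_one_iff' (x := x) (by rwa [Equiv.Perm.cycleOf_apply_self]),
    Equiv.Perm.cycleOf_pow_apply_self, Function.IsPeriodicPt, Function.IsFixedPt,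
    Equiv.Perm.iterate_eq_pow]

theorem card_mp {α : Type} [Fintype α] [DecidableEq α] (σ : Equiv.Perm α) (l : ℕ) (hl : 0 < l) :
    Nat.card {x : α // Function.minimalPeriod σ x = l} = l * Multiset.count l σ.partition.parts := by
  rw [Equiv.Perm.parts_partition, Multiset.count_add, Nat.card_eq_fintype_card, Fintype.card_subtype]
  by_cases h1 : l = 1
  · subst h1
    have : Multiset.count 1 σ.cycleType = 0 := by
      rw [Multiset.count_eq_zero]
      intro h
      exact absurd (Equiv.Perm.two_le_of_mem_cycleType h) (by norm_num)
    rw [this, Multiset.count_replicate_self, zero_add, one_mul, ← Finset.card_compl]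
    congr 1
    ext x
    simp [Function.minimalPeriod_eq_one_iff_isFixedPt, Function.IsFixedPt]
  · rw [Multiset.count_replicate, if_neg (Ne.symm h1), add_zero, Equiv.Perm.cycleType_def, Multiset.count_map]
    have hmem : ∀ x, Function.minimalPeriod σ x = l → x ∈ σ.support := by
      intro x hx
      rw [Equiv.Perm.mem_support]
      intro h
      exact h1 (hx ▸ Function.minimalPeriod_eq_one_iff_isFixedPt.2 h)
    rw [Finset.card_eq_sum_card_fiberwise (f := fun x => σ.cycleOf x)
      (t := σ.cycleFactorsFinset.filter (fun c => l = c.support.card))]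
    · rw [Finset.sum_congr rfl (g := fun _ => l), Finset.sum_const, smul_eq_mul, mul_comm]
      · rfl
      · intro c hc
        obtain ⟨hc, hcl⟩ := Finset.mem_filter.1 hc
        conv_rhs => rw [hcl]
        congr 1
        ext x
        simp only [Finset.mem_filter, Finset.mem_univ, true_and]
        constructor
        · rintro ⟨hx, rfl⟩
          rw [Equiv.Perm.mem_support_cycleOf_iff]
          exact ⟨Equiv.Perm.SameCycle.refl _ _, hmem x hx⟩
        · intro hx
          have hcx := Equiv.Perm.cycle_is_cycleOf hx hc
          have hxs : x ∈ σ.support := Equiv.Perm.mem_cycleFactorsFinset_support_le hc hx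
          refine ⟨?_, hcx.symm⟩
          rw [mp_perm σ x hxs, ← hcx, ← hcl]
    · intro x hx
      have hx := (Finset.mem_filter.1 hx).2
      simp only [Finset.coe_filter, Set.mem_setOf_eq]
      refine ⟨Equiv.Perm.cycleOf_mem_cycleFactorsFinset_iff.2 (hmem x hx), ?_⟩
      rw [← mp_perm σ x (hmem x hx), hx]

/-- rationality of traces -/
theorem trace_rat {V : Type} [AddCommGroup V] [Module ℂ V] [FiniteDimensional ℂ V] {G : Type} [Group G]
    [Finite G] (ρ : Representation ℂ G V)
    (hρ : ∀ (g : G) (j : ℕ), j.Coprime (orderOf g) →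
      LinearMap.trace ℂ V (ρ (g ^ j)) = LinearMap.trace ℂ V (ρ g)) (n : ℕ) :
    ∀ g : G, orderOf g = n → ∃ q : ℚ, LinearMap.trace ℂ V (ρ g) = (q : ℂ) := by
  induction n using Nat.strong_induction_on with
  | _ n ih =>
  intro g hg
  have hn : 0 < n := hg ▸ orderOf_pos g
  have hnC : (n : ℂ) ≠ 0 := by exact_mod_cast hn.ne'
  let p : V →ₗ[ℂ] V := (n : ℂ)⁻¹ • ∑ j ∈ Finset.range n, ρ (g ^ j)
  have hgp : ∀ v, ρ g (p v) = p v := by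
    intro v
    simp only [p, LinearMap.smul_apply, map_smul, LinearMap.sum_apply, map_sum]
    congr 1
    have : ∀ j, ρ g (ρ (g ^ j) v) = ρ (g ^ (j + 1)) v := by
      intro j; rw [pow_succ', map_mul]; rfl
    simp only [this]
    have h1 := Finset.sum_range_succ (fun j => ρ (g ^ j) v) n
    have h2 := Finset.sum_range_succ' (fun j => ρ (g ^ j) v) n
    rw [h1] at h2
    have : g ^ n = 1 := hg ▸ pow_orderOf_eq_one g
    rw [this, pow_zero] at h2
    exact (add_right_cancel h2).symm
  have hproj : LinearMap.IsProj (LinearMap.ker (ρ g - LinearMap.id)) p := by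
    constructor
    · intro v
      rw [LinearMap.mem_ker, LinearMap.sub_apply, hgp]; simp
    · intro v hv
      have hv' : ρ g v = v := by simpa [sub_eq_zero] using hv
      have : ∀ j, ρ (g ^ j) v = v := by
        intro j
        induction j with
        | zero => simp
        | succ j ihj => rw [pow_succ, map_mul, Module.End.mul_apply, hv', ihj]
      simp only [p, LinearMap.smul_apply, LinearMap.sum_apply, this, Finset.sum_const, Finset.card_range]
      rw [← Nat.cast_smul_eq_nsmul ℂ, smul_smul, inv_mul_cancel₀ hnC, one_smul]
  have htr := hproj.trace
  have htr2 : ∑ j ∈ Finset.range n, LinearMap.trace ℂ V (ρ (g ^ j)) =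
      n * (Module.finrank ℂ (LinearMap.ker (ρ g - LinearMap.id)) : ℂ) := by
    rw [← htr]
    simp only [p, map_smul, map_sum, smul_eq_mul]
    rw [mul_inv_cancel_left₀ hnC]
  rw [← Finset.sum_filter_add_sum_filter_not _ (fun j => j.Coprime n)] at htr2
  have hA : ∑ j ∈ Finset.range n with j.Coprime n, LinearMap.trace ℂ V (ρ (g ^ j)) =
      ((Finset.range n).filter (fun j => j.Coprime n)).card * LinearMap.trace ℂ V (ρ g) := by
    rw [Finset.sum_congr rfl (g := fun _ => LinearMap.trace ℂ V (ρ g)), Finset.sum_const, nsmul_eq_mul]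
    intro j hj
    exact hρ g j (hg.symm ▸ (Finset.mem_filter.1 hj).2)
  have hB : ∃ q : ℚ, ∑ j ∈ Finset.range n with ¬ j.Coprime n, LinearMap.trace ℂ V (ρ (g ^ j)) = (q : ℂ) := by
    have : ∀ j : ℕ, ∃ q : ℚ, ¬ j.Coprime n → LinearMap.trace ℂ V (ρ (g ^ j)) = (q : ℂ) := by
      intro j
      by_cases hj : j.Coprime n
      · exact ⟨0, fun h => absurd hj h⟩
      · have hlt : orderOf (g ^ j) < n := by
          rw [orderOf_pow, hg]
          have h1 : Nat.gcd n j ≠ 1 := fun h => hj (Nat.coprime_comm.1 h)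
          have h2 : 0 < Nat.gcd n j := Nat.gcd_pos_of_pos_left _ hn
          exact Nat.div_lt_self hn (by omega)
        obtain ⟨q, hq⟩ := ih _ hlt (g ^ j) rfl
        exact ⟨q, fun _ => hq⟩
    choose q hq using this
    refine ⟨∑ j ∈ Finset.range n with ¬ j.Coprime n, q j, ?_⟩
    push_cast
    exact Finset.sum_congr rfl fun j hj => hq j (Finset.mem_filter.1 hj).2
  obtain ⟨q, hq⟩ := hB
  rw [hA, hq] at htr2
  set c := ((Finset.range n).filter (fun j => j.Coprime n)).card with hc
  have hcpos : c ≠ 0 := by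
    rw [hc, Finset.card_ne_zero]
    refine ⟨1 % n, Finset.mem_filter.2 ⟨Finset.mem_range.2 (Nat.mod_lt _ hn), ?_⟩⟩
    rw [Nat.Coprime, ← Nat.gcd_rec]; simp
  refine ⟨(n * (Module.finrank ℂ (LinearMap.ker (ρ g - LinearMap.id)) : ℚ) - q) / c, ?_⟩
  have hcC : (c : ℂ) ≠ 0 := by exact_mod_cast hcpos
  push_cast
  rw [eq_div_iff hcC, ← htr2]; ring

def permHom {k : ℕ} (σ : Equiv.Perm (Fin k)) : FIObj.of (Fin k) ⟶ FIObj.of (Fin k) := ⟨σ, σ.injective⟩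

noncomputable def rep (M : FIM) (k : ℕ) : Representation ℂ (Equiv.Perm (Fin k)) (M.V (FIObj.of (Fin k))) where
  toFun σ := M.act (permHom σ)
  map_one' := LinearMap.ext fun x => M.act_id _ x
  map_mul' σ τ := LinearMap.ext fun x => M.act_comp (permHom τ) (permHom σ) x

/-- every function in CP is a polynomial in the pp -/
theorem CP_poly {F : ∀ S : FIObj, (S ⟶ S) → ℂ} (hF : F ∈ CP) :
    ∃ P : MvPolynomial ℕ ℂ, ∀ S σ, F S σ = MvPolynomial.eval (fun i => pp (i + 1) S σ) P := by
  rw [CP, Algebra.adjoin_range_eq_range_aeval] at hF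
  obtain ⟨P, rfl⟩ := hF
  refine ⟨P, fun S σ => ?_⟩
  show (MvPolynomial.aeval _ P : ∀ S : FIObj, (S ⟶ S) → ℂ) S σ = _
  induction P using MvPolynomial.induction_on with
  | C a => simp
  | add p q hp hq => rw [map_add, Pi.add_apply, Pi.add_apply, hp, hq, map_add]
  | mul_X p i hp => rw [map_mul, Pi.mul_apply, Pi.mul_apply, hp, map_mul]; simp

theorem poly_rat (P : MvPolynomial ℕ ℂ) : ∃ (n : ℕ) (X : MvPolynomial (Fin n) ℚ),
    ∀ c : ℕ → ℚ, (∃ q : ℚ, MvPolynomial.eval (fun i => (c i : ℂ)) P = (q : ℂ)) →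
      MvPolynomial.eval (fun i => (c i : ℂ)) P = algebraMap ℚ ℂ (MvPolynomial.eval (fun i : Fin n => c i.val) X) := by
  obtain ⟨φ, hφ⟩ := LinearMap.exists_leftInverse_of_injective (Algebra.linearMap ℚ ℂ)
    (LinearMap.ker_eq_bot.2 (algebraMap ℚ ℂ).injective)
  have hφ' : ∀ q : ℚ, φ (q : ℂ) = q := fun q => LinearMap.congr_fun hφ q
  let n := P.vars.sup id + 1
  let X : MvPolynomial (Fin n) ℚ := ∑ m ∈ P.support, MvPolynomial.C (φ (P.coeff m)) *
    ∏ i ∈ P.vars, (if h : i < n then MvPolynomial.X ⟨i, h⟩ else 0) ^ m i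
  refine ⟨n, X, fun c hc => ?_⟩
  obtain ⟨q, hq⟩ := hc
  rw [hq]
  have hlt : ∀ i ∈ P.vars, i < n := fun i hi => Nat.lt_succ_of_le (Finset.le_sup (f := id) hi)
  have h1 : MvPolynomial.eval (fun i => (c i : ℂ)) P =
      ∑ m ∈ P.support, ((∏ i ∈ P.vars, c i ^ m i : ℚ) : ℂ) * P.coeff m := by
    rw [MvPolynomial.eval_eq]
    refine Finset.sum_congr rfl fun m hm => ?_
    rw [mul_comm]
    push_cast
    congr 1
    refine Finset.prod_subset ?_ ?_
    · intro i hi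
      exact MvPolynomial.mem_vars_iff_mem_support _ |>.2 ⟨m, hm, hi⟩
    · intro i _ hi
      rw [Finsupp.notMem_support_iff.1 hi, pow_zero]
  have h2 : MvPolynomial.eval (fun i : Fin n => c i.val) X =
      ∑ m ∈ P.support, (∏ i ∈ P.vars, c i ^ m i) * φ (P.coeff m) := by
    rw [map_sum]
    refine Finset.sum_congr rfl fun m hm => ?_
    rw [map_mul, MvPolynomial.eval_C, mul_comm, map_prod]
    congr 1
    refine Finset.prod_congr rfl fun i hi => ?_
    rw [dif_pos (hlt i hi), map_pow, MvPolynomial.eval_X]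
  have h3 : φ (q : ℂ) = MvPolynomial.eval (fun i : Fin n => c i.val) X := by
    rw [← hq, h1, h2, map_sum]
    refine Finset.sum_congr rfl fun m hm => ?_
    have : ∀ (r : ℚ) (z : ℂ), φ ((r : ℂ) * z) = r * φ z := by
      intro r z
      have := φ.map_smul r z
      rwa [Algebra.smul_def, smul_eq_mul] at this
    rw [this]
  rw [← h3, hφ']; rfl

end final

theorem eval_scale (P : MvPolynomial ℕ ℂ) (s c : ℕ → ℂ) :
    MvPolynomial.eval (fun i => s i * c i) P = MvPolynomial.eval c
      (MvPolynomial.aeval (fun i : ℕ => MvPolynomial.C (s i) * MvPolynomial.X i) P) := by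
  induction P using MvPolynomial.induction_on with
  | C a => simp [MvPolynomial.algebraMap_eq]
  | add p q hp hq => rw [map_add, map_add, map_add, hp, hq]
  | mul_X p i hp => rw [map_mul, map_mul, map_mul, hp]; simp

theorem final (M : FIMod) (hM : FIMod.FG M) :
    ∃ (n N : ℕ) (X : MvPolynomial (Fin n) ℚ),
      ∀ (k : ℕ) (σ : Equiv.Perm (Fin k)), N < k →
        traceOfPerm M k σ =
          algebraMap ℚ ℂ (MvPolynomial.eval
            (fun i : Fin n => (Multiset.count (i.val + 1) σ.partition.parts : ℚ)) X) := by
  obtain ⟨hfd, d, hd⟩ := fd_of_fg M hM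
  obtain ⟨-, F, hF, N, hN⟩ := main_ind d (toFIM M) hfd hd
  obtain ⟨P, hP⟩ := CP_poly hF
  let P' : MvPolynomial ℕ ℂ := MvPolynomial.aeval
    (fun i : ℕ => MvPolynomial.C ((i + 1 : ℕ) : ℂ) * MvPolynomial.X i) P
  obtain ⟨n, X, hX⟩ := poly_rat P'
  refine ⟨n, N, X, fun k σ hk => ?_⟩
  have htr : ∀ τ : Equiv.Perm (Fin k), LinearMap.trace ℂ _ (rep (toFIM M) k τ) =
      MvPolynomial.eval (fun i => pp (i + 1) (FIObj.of (Fin k)) (permHom τ)) P := by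
    intro τ
    rw [← hP]
    refine hN _ (permHom τ) ?_
    have : crd (FIObj.of (Fin k)) = k := Fintype.card_fin k
    omega
  have hfdk := hfd (FIObj.of (Fin k))
  have hrat := trace_rat (rep (toFIM M) k) (by
    intro g j hj
    rw [htr, htr]
    congr 1
    congr 1
    funext i
    show ((Nat.card {x : Fin k // Function.minimalPeriod (g ^ j : Equiv.Perm (Fin k)) x = i + 1} : ℕ) : ℂ) =
      ((Nat.card {x : Fin k // Function.minimalPeriod g x = i + 1} : ℕ) : ℂ)
    have : ∀ x : Fin k, Function.minimalPeriod (g ^ j : Equiv.Perm (Fin k)) x = Function.minimalPeriod g x := by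
      intro x
      rw [← Equiv.Perm.iterate_eq_pow, Function.minimalPeriod_iterate_eq_div_gcd'
        (g.injective.mem_periodicPts x)]
      have hdvd : Function.minimalPeriod g x ∣ orderOf g := by
        apply Function.IsPeriodicPt.minimalPeriod_dvd
        rw [Function.IsPeriodicPt, Function.IsFixedPt, Equiv.Perm.iterate_eq_pow, pow_orderOf_eq_one]
        rfl
      have : Nat.gcd (Function.minimalPeriod g x) j = 1 :=
        Nat.Coprime.coprime_dvd_left hdvd hj.symm
      rw [this, Nat.div_one]
    simp only [this]) _ σ rfl
  have heq : MvPolynomial.eval (fun i => pp (i + 1) (FIObj.of (Fin k)) (permHom σ)) P =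
      MvPolynomial.eval (fun i => (((Multiset.count (i + 1) σ.partition.parts : ℕ) : ℚ) : ℂ)) P' := by
    have : ∀ i, pp (i + 1) (FIObj.of (Fin k)) (permHom σ) =
        ((i + 1 : ℕ) : ℂ) * (((Multiset.count (i + 1) σ.partition.parts : ℕ) : ℚ) : ℂ) := by
      intro i
      have := card_mp σ (i + 1) (Nat.succ_pos i)
      show ((Nat.card {x : Fin k // Function.minimalPeriod σ x = i + 1} : ℕ) : ℂ) = _
      rw [this]; push_cast; rfl
    simp only [this, P']
    exact eval_scale P (fun i => ((i + 1 : ℕ) : ℂ)) _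
  have e : traceOfPerm M k σ = LinearMap.trace ℂ _ (rep (toFIM M) k σ) := rfl
  rw [← e] at hrat
  rw [htr, heq] at e
  rw [e] at hrat ⊢
  exact hX _ hrat

end FIChar

/-- Character polynomials: for a finitely generated FI-module M there
are n, N and a polynomial X in variables `a_1, …, a_n` (variable `i : Fin n`
representing `a_{i+1}`) such that for any permutation σ of `{1,…,k}` with `k > N` of
cycle type μ, the trace of σ on `M_k` is `X(m_1(μ), …, m_n(μ))`, where `m_j(μ)` is the
number of parts of μ equal to j. -/
theorem fg_FIMod_character_polynomial (M : FIMod) (hM : FIMod.FG M) :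
    ∃ (n N : ℕ) (X : MvPolynomial (Fin n) ℚ),
      ∀ (k : ℕ) (σ : Equiv.Perm (Fin k)), N < k →
        traceOfPerm M k σ =
          algebraMap ℚ ℂ (MvPolynomial.eval
            (fun i : Fin n => (Multiset.count (i.val + 1) σ.partition.parts : ℚ)) X) := by
  exact FIChar.final M hM
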